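/- Let γ be an admissible curve in G¹₃ with ε = +1 whose equiform curvature 𝒦 is identically zero and whose equiform torsion 𝒯 is a nonzero constant (an equiform Bertrand curve / circular helix). Then: (a) 𝒯° − 3𝒦𝒯 ≡ 0 and the AW(3) identity ⟨Q₁(x),Q₁(x)⟩·Q₃(x) = ⟨Q₃(x),Q₁(x)⟩·Q₁(x) holds for all x, so γ is of equiform AW(3)-type; (b) Q₃(x) ≠ 0 for all x, so γ is not of equiform AW(1)-type; (c) ⟨Q₂(x),Q₂(x)⟩·Q₃(x) ≠ ⟨Q₃(x),Q₂(x)⟩·Q₂(x) for all x, so γ is not of equiform AW(2)-type. -/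

import Mathlib

noncomputable section

open Real

/-- Model of the pseudo-Galilean space `G¹₃` as `ℝ³`. -/
abbrev V3 := ℝ × ℝ × ℝ

/-- The pseudo-Galilean scalar product on `ℝ³`. -/
def pgInner (u v : V3) : ℝ :=
  if u.1 ≠ 0 ∨ v.1 ≠ 0 then u.1 * v.1 else u.2.1 * v.2.1 - u.2.2 * v.2.2

/-- Curvature of the admissible curve `x ↦ (x, y x, z x)`. -/
def curv (y z : ℝ → ℝ) (x : ℝ) : ℝ :=
  Real.sqrt |(deriv (deriv y) x) ^ 2 - (deriv (deriv z) x) ^ 2|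

/-- Torsion of the admissible curve `x ↦ (x, y x, z x)`. -/
def tors (y z : ℝ → ℝ) (x : ℝ) : ℝ :=
  (deriv (deriv y) x * deriv (deriv (deriv z)) x -
    deriv (deriv (deriv y)) x * deriv (deriv z) x) / (curv y z x) ^ 2

/-- Radius of curvature `ρ = 1/κ`. -/
def rho (y z : ℝ → ℝ) (x : ℝ) : ℝ := 1 / curv y z x

/-- Equiform curvature `𝒦 = ρ'`. -/
def eqK (y z : ℝ → ℝ) (x : ℝ) : ℝ := deriv (rho y z) x

/-- Equiform torsion `𝒯 = ρ·τ`. -/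
def eqT (y z : ℝ → ℝ) (x : ℝ) : ℝ := rho y z x * tors y z x

/-- Frenet tangent `e₁ = (1, y', z')`. -/
def e1 (y z : ℝ → ℝ) (x : ℝ) : V3 := (1, deriv y x, deriv z x)

/-- Frenet principal normal `e₂ = (1/κ)(0, y'', z'')`. -/
def e2 (y z : ℝ → ℝ) (x : ℝ) : V3 :=
  (0, deriv (deriv y) x / curv y z x, deriv (deriv z) x / curv y z x)

/-- Frenet binormal `e₃ = (1/κ)(0, ε·z'', ε·y'')`. -/
def e3 (y z : ℝ → ℝ) (ε : ℝ) (x : ℝ) : V3 :=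
  (0, ε * deriv (deriv z) x / curv y z x, ε * deriv (deriv y) x / curv y z x)

/-- Equiform tangent `T = ρ·e₁`. -/
def Tv (y z : ℝ → ℝ) (x : ℝ) : V3 := rho y z x • e1 y z x

/-- Equiform principal normal `N = ρ·e₂`. -/
def Nv (y z : ℝ → ℝ) (x : ℝ) : V3 := rho y z x • e2 y z x

/-- Equiform binormal `B = ρ·e₃`. -/
def Bv (y z : ℝ → ℝ) (ε : ℝ) (x : ℝ) : V3 := rho y z x • e3 y z ε x

/-- Derivative with respect to the equiform parameter: `f° = ρ·f'`. -/
def eqD {E : Type*} [NormedAddCommGroup E] [NormedSpace ℝ E]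
    (y z : ℝ → ℝ) (f : ℝ → E) (x : ℝ) : E := rho y z x • deriv f x

/-- `Q₁ = ρ⁻²·N`. -/
def Q1 (y z : ℝ → ℝ) (x : ℝ) : V3 := ((rho y z x) ^ (-2 : ℤ)) • Nv y z x

/-- `Q₂ = ρ⁻³·(−𝒦N + 𝒯B)`. -/
def Q2 (y z : ℝ → ℝ) (ε : ℝ) (x : ℝ) : V3 :=
  ((rho y z x) ^ (-3 : ℤ)) • ((-(eqK y z x)) • Nv y z x + (eqT y z x) • Bv y z ε x)

/-- `Q₃ = ρ⁻⁴·[(2𝒦² + 𝒯² − 𝒦°)N + (𝒯° − 3𝒦𝒯)B]`. -/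
def Q3 (y z : ℝ → ℝ) (ε : ℝ) (x : ℝ) : V3 :=
  ((rho y z x) ^ (-4 : ℤ)) •
    ((2 * (eqK y z x) ^ 2 + (eqT y z x) ^ 2 - eqD y z (eqK y z) x) • Nv y z x +
      (eqD y z (eqT y z) x - 3 * eqK y z x * eqT y z x) • Bv y z ε x)

theorem eqD_eq_zero_of_eqOn_const {y z f : ℝ → ℝ} {I : Set ℝ} {c x : ℝ}
    (hI : IsOpen I) (hx : x ∈ I) (hf : ∀ t ∈ I, f t = c) : eqD y z f x = 0 := by
  have h : f =ᶠ[nhds x] fun _ => c := Filter.eventually_of_mem (hI.mem_nhds hx) hf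
  simp [eqD, h.deriv_eq]

theorem curv_pos {y z : ℝ → ℝ} {x : ℝ}
    (h : 0 < (deriv (deriv y) x) ^ 2 - (deriv (deriv z) x) ^ 2) : 0 < curv y z x :=
  Real.sqrt_pos.2 (abs_pos.2 h.ne')

theorem Q1_eq {y z : ℝ → ℝ} {x : ℝ} (h : curv y z x ≠ 0) :
    Q1 y z x = (0, deriv (deriv y) x, deriv (deriv z) x) := by
  simp only [Q1, Nv, e2, rho, Prod.smul_mk, smul_eq_mul, mul_zero, Prod.mk.injEq, true_and]
  constructor <;> field_simp

theorem Q2_eq_of_eqK_eq_zero {y z : ℝ → ℝ} {ε x : ℝ} (h : curv y z x ≠ 0)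
    (hK : eqK y z x = 0) :
    Q2 y z ε x = (eqT y z x * ε * curv y z x) •
      ((0, deriv (deriv z) x, deriv (deriv y) x) : V3) := by
  simp only [Q2, hK, Bv, e3, neg_zero, zero_smul, zero_add, Prod.smul_mk, smul_eq_mul,
    mul_zero, Prod.mk.injEq, true_and]
  constructor <;> simp only [rho] <;> field_simp

theorem Q3_eq_of_eqK_eq_zero {y z : ℝ → ℝ} {ε x : ℝ} (h : curv y z x ≠ 0)
    (hK : eqK y z x = 0) (hK' : eqD y z (eqK y z) x = 0) (hT' : eqD y z (eqT y z) x = 0) :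
    Q3 y z ε x = (eqT y z x * curv y z x) ^ 2 •
      ((0, deriv (deriv y) x, deriv (deriv z) x) : V3) := by
  have hQ : Q3 y z ε x = (eqT y z x / rho y z x) ^ 2 • Q1 y z x := by
    have hr : rho y z x ≠ 0 := one_div_ne_zero h
    simp only [Q3, Q1, hK, hK', hT', smul_smul]
    simp only [mul_zero, zero_mul, sub_zero, zero_smul, add_zero, smul_smul, ne_eq,
      OfNat.ofNat_ne_zero, not_false_eq_true, zero_pow, zero_add]
    congr 1
    field_simp
  rw [hQ, Q1_eq h, rho, div_div_eq_mul_div, div_one]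

/-- an equiform Bertrand curve / circular helix (`𝒦 ≡ 0`, `𝒯` a nonzero
constant, `ε = +1`) is of equiform AW(3)-type, but neither of equiform AW(1)- nor of
equiform AW(2)-type. -/
theorem pg_bertrand_AW_types (I : Set ℝ) (y z : ℝ → ℝ) (c : ℝ)
    (hI : IsOpen I) (hy : ContDiff ℝ (⊤ : ℕ∞) y) (hz : ContDiff ℝ (⊤ : ℕ∞) z)
    (hsign : ∀ x ∈ I, 0 < (deriv (deriv y) x) ^ 2 - (deriv (deriv z) x) ^ 2)
    (hc : c ≠ 0) (hK : ∀ x ∈ I, eqK y z x = 0) (hT : ∀ x ∈ I, eqT y z x = c) :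
    ∀ x ∈ I,
      (eqD y z (eqT y z) x - 3 * eqK y z x * eqT y z x = 0 ∧
        (pgInner (Q1 y z x) (Q1 y z x)) • Q3 y z 1 x =
          (pgInner (Q3 y z 1 x) (Q1 y z x)) • Q1 y z x) ∧
      Q3 y z 1 x ≠ 0 ∧
      (pgInner (Q2 y z 1 x) (Q2 y z 1 x)) • Q3 y z 1 x ≠
        (pgInner (Q3 y z 1 x) (Q2 y z 1 x)) • Q2 y z 1 x := by
  intro x hx
  have hk := (curv_pos (hsign x hx)).ne'
  have hK' : eqD y z (eqK y z) x = 0 := eqD_eq_zero_of_eqOn_const hI hx hK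
  have hT' : eqD y z (eqT y z) x = 0 := eqD_eq_zero_of_eqOn_const hI hx hT
  have hab := (hsign x hx).ne'
  have hm : (c * curv y z x) ^ 2 ≠ 0 := pow_ne_zero 2 (mul_ne_zero hc hk)
  have hv : ((0, deriv (deriv y) x, deriv (deriv z) x) : V3) ≠ 0 := by
    intro h
    simp only [Prod.mk_eq_zero, true_and] at h
    exact hab (by rw [h.1, h.2]; ring)
  have h2 := Q2_eq_of_eqK_eq_zero (ε := 1) hk (hK x hx)
  have h3 := Q3_eq_of_eqK_eq_zero (ε := 1) hk (hK x hx) hK' hT'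
  rw [hT x hx, mul_one] at h2
  rw [hT x hx] at h3
  have h3_ne : Q3 y z 1 x ≠ 0 := h3 ▸ smul_ne_zero hm hv
  refine ⟨⟨by rw [hT', hK x hx]; ring, ?_⟩, h3_ne, ?_⟩
  · rw [Q1_eq hk, h3, smul_smul]
    congr 1
    simp [pgInner]
    ring
  · have h22 : pgInner (Q2 y z 1 x) (Q2 y z 1 x) =
        -((c * curv y z x) ^ 2 * (deriv (deriv y) x ^ 2 - deriv (deriv z) x ^ 2)) := by
      rw [h2]
      simp [pgInner]
      ring
    have h32 : pgInner (Q3 y z 1 x) (Q2 y z 1 x) = 0 := by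
      rw [h2, h3]
      simp [pgInner]
      ring
    rw [h32, zero_smul, h22]
    exact smul_ne_zero (neg_ne_zero.2 (mul_ne_zero hm hab)) h3_ne
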